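/- Let d ≥ 1, D := {1,...,d}, let B ⊆ D be nonempty with B' := D \ B, and define g : I^d → ℝ by g(x) := ∏_{i∈B} D_{2^{2n+1}}(x_i)/2. There exists a constant c > 0 depending only on d such that for every n ≥ m_0, ‖(L_{p_n(B)}∘R_{p_n(B')})(g)‖_{L^1(I^d)} ≥ c·n^{|B|}, where p_n(B) denotes the index vector all of whose coordinates equal p_n. -/

import Mathlib

open MeasureTheory Filter

noncomputable section

/-- The unit cube `[0,1)^d`. -/
def unitCube (d : ℕ) : Set (Fin d → ℝ) := Set.univ.pi fun _ => Set.Ico (0:ℝ) 1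

/-- Lebesgue measure restricted to the unit cube `[0,1)^d`. -/
def cubeMeasure (d : ℕ) : Measure (Fin d → ℝ) := volume.restrict (unitCube d)

/-- The `1`-periodic function equal to `1` on `[0,1/2)` and to `-1` on `[1/2,1)`. -/
def r0 (x : ℝ) : ℝ := if Int.fract x < 1/2 then 1 else -1

/-- The Rademacher functions. -/
def rademacher (n : ℕ) (x : ℝ) : ℝ := r0 (2 ^ n * x)

/-- The Walsh functions (in Paley enumeration, via binary digits). -/
def walsh (n : ℕ) (x : ℝ) : ℝ :=
  ∏ k ∈ Finset.range (n + 1), if n.testBit k then rademacher k x else 1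

/-- The Walsh–Dirichlet kernel `D_n`. -/
def dirichletKernel (n : ℕ) (x : ℝ) : ℝ := ∑ k ∈ Finset.range n, walsh k x

/-- `l_n = ∑_{k=1}^{n-1} 1/k`. -/
def logSum (n : ℕ) : ℝ := ∑ k ∈ Finset.Icc 1 (n - 1), (1 : ℝ) / k

/-- The Nörlund logarithmic kernel `F_n`. -/
def FKernel (n : ℕ) (u : ℝ) : ℝ :=
  (1 / logSum n) * ∑ i ∈ Finset.Ico 1 n, dirichletKernel (n - i) u / i

/-- The Riesz logarithmic kernel `G_n`. -/
def GKernel (n : ℕ) (u : ℝ) : ℝ :=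
  (1 / logSum n) * ∑ i ∈ Finset.Ico 1 n, dirichletKernel i u / i

/-- Walsh–Fourier coefficient of `f` on the unit cube. -/
def walshCoef {d : ℕ} (f : (Fin d → ℝ) → ℝ) (j : Fin d → ℕ) : ℝ :=
  ∫ x, f x * ∏ i, walsh (j i) (x i) ∂(cubeMeasure d)

/-- Rectangular partial sums of the multiple Walsh–Fourier series. -/
def rectPartialSum {d : ℕ} (f : (Fin d → ℝ) → ℝ) (N : Fin d → ℕ) (x : Fin d → ℝ) : ℝ :=
  ∑ j ∈ Fintype.piFinset (fun i => Finset.range (N i)),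
    walshCoef f j * ∏ i, walsh (j i) (x i)

/-- The mixed logarithmic means `(L_{n_B} ∘ R_{n_{B'}})(f)`. -/
def mixedLogMean {d : ℕ} (B : Finset (Fin d)) (f : (Fin d → ℝ) → ℝ)
    (n : Fin d → ℕ) (x : Fin d → ℝ) : ℝ :=
  (∏ j, logSum (n j))⁻¹ *
    ∑ i ∈ Fintype.piFinset (fun j => Finset.Ico 1 (n j)),
      rectPartialSum f (fun j => if j ∈ B then n j - i j else i j) x / ∏ j, (i j : ℝ)

/-- A Young function: convex, continuous, even, vanishing at `0`, with
`Q(u)/u → ∞` at `+∞` and `Q(u)/u → 0` at `0`. -/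
structure YoungFunction where
  toFun : ℝ → ℝ
  nonneg : ∀ u, 0 ≤ toFun u
  convexOn : ConvexOn ℝ Set.univ toFun
  continuous : Continuous toFun
  even : ∀ u, toFun (-u) = toFun u
  map_zero : toFun 0 = 0
  tendsto_atTop : Tendsto (fun u => toFun u / u) atTop atTop
  tendsto_zero : Tendsto (fun u => toFun u / u) (nhdsWithin 0 {(0:ℝ)}ᶜ) (nhds 0)

/-- The set of admissible constants `k` in the Luxemburg norm of `f`. -/
def orliczSet {d : ℕ} (Q : YoungFunction) (f : (Fin d → ℝ) → ℝ) : Set ℝ :=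
  {k | 0 < k ∧ Integrable (fun x => Q.toFun (|f x| / k)) (cubeMeasure d) ∧
    ∫ x, Q.toFun (|f x| / k) ∂(cubeMeasure d) ≤ 1}

/-- `f` belongs to the Orlicz space `L_Q(I^d)`. -/
def MemOrlicz {d : ℕ} (Q : YoungFunction) (f : (Fin d → ℝ) → ℝ) : Prop :=
  Measurable f ∧ (orliczSet Q f).Nonempty

/-- The Luxemburg norm on the Orlicz space `L_Q(I^d)`. -/
def orliczNorm {d : ℕ} (Q : YoungFunction) (f : (Fin d → ℝ) → ℝ) : ℝ :=
  sInf (orliczSet Q f)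

/-- `p_n = 2^{2n} + 2^{2n-2} + ⋯ + 2^0`. -/
def pIdx (n : ℕ) : ℕ := ∑ k ∈ Finset.range (n + 1), 4 ^ k

/-- `m̃ = ⌊ l_{p_{⌊m/2⌋}-1}/16 - 2^15 ⌋`. -/
def mTilde (m : ℕ) : ℤ := ⌊logSum (pIdx (m / 2) - 1) / 16 - 2 ^ 15⌋

/-- `m₀ = min{m : m̃ > 1}`. -/
def m₀ : ℕ := sInf {m : ℕ | 1 < mTilde m}

/-- The set `Ω_n`. -/
def Omega (n : ℕ) : Set ℝ :=
  ⋃ m ∈ Finset.Icc n (2 * n),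
    Set.Ico ((2:ℝ) ^ (-(m:ℤ) - 1) + (2:ℝ) ^ (-(m:ℤ) - mTilde m)) ((2:ℝ) ^ (-(m:ℤ)))

/-- `k`-th binary digit of `x` (the expansion not terminating in `1`'s). -/
def binDigit (k : ℕ) (x : ℝ) : ℕ := (⌊x * 2 ^ (k + 1)⌋).toNat % 2

/-- Dyadic addition on `[0,1)`. -/
def dyadicAdd (x t : ℝ) : ℝ :=
  ∑' k : ℕ, |(binDigit k x : ℝ) - (binDigit k t : ℝ)| / 2 ^ (k + 1)

/-- Dyadic convolution `f ∗ K` on `[0,1)`. -/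
def dyadicConv (f K : ℝ → ℝ) (x : ℝ) : ℝ :=
  ∫ t in Set.Ico (0:ℝ) 1, f t * K (dyadicAdd x t)

/-- Lebesgue measure restricted to `[0,1)`. -/
def unitMeasure : Measure ℝ := volume.restrict (Set.Ico (0:ℝ) 1)

/-- A set `A ⊆ L_Q(I^d)` is nowhere dense w.r.t. the Luxemburg norm. -/
def OrliczNowhereDense {d : ℕ} (Q : YoungFunction) (A : Set ((Fin d → ℝ) → ℝ)) : Prop :=
  ∀ f, MemOrlicz Q f → ∀ ε > 0, ∃ g, MemOrlicz Q g ∧ ∃ δ > 0,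
    (∀ h, MemOrlicz Q h → orliczNorm Q (h - g) < δ → orliczNorm Q (h - f) < ε) ∧
    (∀ h, MemOrlicz Q h → orliczNorm Q (h - g) < δ → h ∉ A)

/-- A set `A ⊆ L_Q(I^d)` is of first Baire category (meager) w.r.t. the Luxemburg norm. -/
def OrliczMeager {d : ℕ} (Q : YoungFunction) (A : Set ((Fin d → ℝ) → ℝ)) : Prop :=
  ∃ F : ℕ → Set ((Fin d → ℝ) → ℝ), (∀ k, OrliczNowhereDense Q (F k)) ∧ A ⊆ ⋃ k, F k

/-!
On the set `B` of coordinates the mixed mean of a tensor product factors into one-dimensional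
Nörlund logarithmic means, and off `B` it averages the constant `1` to `1`. As `p_n ≤ 2^{2n+1}`, the
Nörlund mean of `D_{2^{2n+1}}` is the kernel `F_{p_n}`, so everything reduces to
`‖F_{p_n}‖₁ ≥ n / 24`.

The shells `[2^{-m-1}, 2^{-m})` are disjoint, so `‖F_{p_n}‖₁` is at least the sum over `a ≤ n` of
the integrals of `F_{p_n}` over the shells `m = 2a`, each taken against the sign `w_{p_n - p_a}`.
The `k`-th Walsh coefficient of `F_N` is `l_{N-k} / l_N`, which turns such an integral into the
difference of the averages of `l` over two neighbouring blocks of `4^a` indices. Because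
`p_a = 4^a + (4^a - 1) / 3`, only a third of the second block meets nonzero terms, the difference is
of order `l_{4^a} ∼ a`, and the sum over `a` is of order `n²`, against `l_{p_n} ∼ n`.
-/

/-! ### Rademacher and Walsh functions -/

lemma rademacher_eq_one_or_neg_one (k : ℕ) (x : ℝ) : rademacher k x = 1 ∨ rademacher k x = -1 := by
  unfold rademacher r0
  split_ifs <;> simp

lemma rademacher_mul_self (k : ℕ) (x : ℝ) : rademacher k x * rademacher k x = 1 :=
  mul_self_eq_one_iff.2 (rademacher_eq_one_or_neg_one k x)

lemma measurable_rademacher (k : ℕ) : Measurable (rademacher k) := by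
  have measurable_r0 : Measurable r0 :=
    Measurable.ite (measurableSet_lt measurable_fract measurable_const)
      measurable_const measurable_const
  exact measurable_r0.comp (measurable_id.const_mul _)

lemma r0_periodic : Function.Periodic r0 1 := fun x => by
  simp only [r0, Int.fract_add_one]

lemma r0_antiperiodic : Function.Antiperiodic r0 (1 / 2) := fun x => by
  have fract_nonneg := Int.fract_nonneg x
  have fract_lt_one := Int.fract_lt_one x
  have floor_add_fract := Int.floor_add_fract x
  unfold r0
  by_cases h : Int.fract x < 1 / 2
  · have fract_shift : Int.fract (x + 1 / 2) = Int.fract x + 1 / 2 :=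
      Int.fract_eq_iff.2 ⟨by linarith, by linarith, ⌊x⌋, by linarith⟩
    rw [if_pos h, if_neg (by linarith)]
  · have fract_shift : Int.fract (x + 1 / 2) = Int.fract x - 1 / 2 :=
      Int.fract_eq_iff.2 ⟨by linarith, by linarith, ⌊x⌋ + 1, by push_cast; linarith⟩
    rw [if_neg h, if_pos (by linarith), neg_neg]

lemma rademacher_periodic {m k : ℕ} (h : m ≤ k) :
    Function.Periodic (rademacher k) (2 ^ m)⁻¹ := fun x => by
  have shift : (2 : ℝ) ^ k * (x + (2 ^ m)⁻¹) = 2 ^ k * x + ((2 ^ (k - m) : ℕ) : ℝ) * 1 := by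
    push_cast
    rw [pow_sub₀ _ two_ne_zero h]
    ring
  rw [rademacher, shift, r0_periodic.nat_mul, rademacher]

lemma rademacher_antiperiodic (k : ℕ) :
    Function.Antiperiodic (rademacher k) (2 ^ (k + 1))⁻¹ := fun x => by
  have shift : (2 : ℝ) ^ k * (x + (2 ^ (k + 1))⁻¹) = 2 ^ k * x + 1 / 2 := by
    field_simp
    ring
  rw [rademacher, shift, r0_antiperiodic, rademacher]

lemma walsh_eq_prod_range {n N : ℕ} (h : n < 2 ^ N) (x : ℝ) :
    walsh n x = ∏ k ∈ Finset.range N, if n.testBit k then rademacher k x else 1 := by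
  have prod_extend {M M' : ℕ} (hM : n < 2 ^ M) (hMM' : M ≤ M') :
      (∏ k ∈ Finset.range M, if n.testBit k then rademacher k x else 1) =
        ∏ k ∈ Finset.range M', if n.testBit k then rademacher k x else 1 := by
    refine Finset.prod_subset (Finset.range_subset_range.2 hMM') fun k _ hk => ?_
    have hMk : M ≤ k := by simpa using hk
    simp [Nat.testBit_lt_two_pow (hM.trans_le (Nat.pow_le_pow_right two_pos hMk))]
  have hn : n < 2 ^ (n + 1) := Nat.lt_two_pow_self.trans (Nat.pow_lt_pow_succ one_lt_two)
  rcases le_total (n + 1) N with hN | hN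
  · exact prod_extend hn hN
  · exact (prod_extend h hN).symm

lemma walsh_zero (x : ℝ) : walsh 0 x = 1 := by simp [walsh]

lemma walsh_two_pow (m : ℕ) (x : ℝ) : walsh (2 ^ m) x = rademacher m x := by
  rw [walsh_eq_prod_range (Nat.pow_lt_pow_succ one_lt_two), Finset.prod_eq_single m]
  · simp [Nat.testBit_two_pow_self]
  · intro k _ hk
    simp [hk.symm]
  · simp

lemma abs_walsh (n : ℕ) (x : ℝ) : |walsh n x| = 1 := by
  rw [walsh, Finset.abs_prod]
  refine Finset.prod_eq_one fun k _ => ?_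
  rcases rademacher_eq_one_or_neg_one k x with h | h <;> split_ifs <;> simp [h]

lemma measurable_walsh (n : ℕ) : Measurable (walsh n) := by
  refine Finset.measurable_prod _ fun k _ => ?_
  split_ifs
  · exact measurable_rademacher k
  · exact measurable_const

lemma walsh_xor (j k : ℕ) (x : ℝ) : walsh (j ^^^ k) x = walsh j x * walsh k x := by
  have hj : j < 2 ^ (j + k) :=
    Nat.lt_two_pow_self.trans_le (Nat.pow_le_pow_right two_pos (Nat.le_add_right j k))
  have hk : k < 2 ^ (j + k) :=
    Nat.lt_two_pow_self.trans_le (Nat.pow_le_pow_right two_pos (Nat.le_add_left k j))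
  rw [walsh_eq_prod_range (Nat.xor_lt_two_pow hj hk), walsh_eq_prod_range hj,
    walsh_eq_prod_range hk, ← Finset.prod_mul_distrib]
  refine Finset.prod_congr rfl fun i _ => ?_
  rw [Nat.testBit_xor]
  cases j.testBit i <;> cases k.testBit i <;> simp [rademacher_mul_self]

lemma walsh_two_pow_mul_add {m i : ℕ} (hi : i < 2 ^ m) (q : ℕ) (x : ℝ) :
    walsh (2 ^ m * q + i) x = walsh (2 ^ m * q) x * walsh i x := by
  rw [← walsh_xor]
  congr 1
  refine Nat.eq_of_testBit_eq fun j => ?_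
  rw [Nat.testBit_xor, Nat.testBit_two_pow_mul_add _ hi, Nat.testBit_two_pow_mul]
  rcases lt_or_ge j m with hj | hj
  · simp [hj, hj.not_ge]
  · simp [hj, hj.not_gt, Nat.testBit_lt_two_pow (hi.trans_le (Nat.pow_le_pow_right two_pos hj))]

lemma walsh_two_pow_add {m i : ℕ} (hi : i < 2 ^ m) (x : ℝ) :
    walsh (2 ^ m + i) x = rademacher m x * walsh i x := by
  simpa only [mul_one, walsh_two_pow] using walsh_two_pow_mul_add hi 1 x

lemma walsh_two_pow_mul_periodic (m q : ℕ) :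
    Function.Periodic (walsh (2 ^ m * q)) (2 ^ m)⁻¹ := fun x => by
  refine Finset.prod_congr rfl fun k _ => ?_
  rw [Nat.testBit_two_pow_mul]
  by_cases h : m ≤ k
  · rw [rademacher_periodic h]
  · simp [h]

lemma walsh_periodic (n : ℕ) : Function.Periodic (walsh n) 1 := by
  simpa using walsh_two_pow_mul_periodic 0 n

lemma exists_walsh_antiperiodic {n : ℕ} (hn : n ≠ 0) :
    ∃ t, Function.Antiperiodic (walsh n) t := by
  obtain ⟨m, _, ⟨q, rfl⟩, rfl⟩ := Nat.exists_eq_two_pow_mul_odd hn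
  have split_lowest_bit (x : ℝ) :
      walsh (2 ^ m * (2 * q + 1)) x = walsh (2 ^ (m + 1) * q) x * rademacher m x := by
    rw [← walsh_two_pow, ← walsh_two_pow_mul_add (Nat.pow_lt_pow_succ one_lt_two)]
    congr 1
    ring
  refine ⟨(2 ^ (m + 1))⁻¹, fun x => ?_⟩
  rw [split_lowest_bit, split_lowest_bit, walsh_two_pow_mul_periodic, rademacher_antiperiodic,
    mul_neg]

lemma dirichletKernel_two_pow (m : ℕ) (x : ℝ) :
    dirichletKernel (2 ^ m) x = ∏ k ∈ Finset.range m, (1 + rademacher k x) := by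
  induction m with
  | zero => simp [dirichletKernel, walsh_zero]
  | succ m ih =>
    rw [Finset.prod_range_succ, ← ih]
    simp only [dirichletKernel]
    rw [pow_succ, mul_two, Finset.sum_range_add,
      Finset.sum_congr rfl fun i hi => walsh_two_pow_add (Finset.mem_range.1 hi) x,
      ← Finset.mul_sum]
    ring

/-! ### One-dimensional Walsh–Fourier coefficients -/

instance : IsProbabilityMeasure unitMeasure := ⟨by simp [unitMeasure]⟩

lemma integrable_mul_walsh {μ : Measure ℝ} {f : ℝ → ℝ} (hf : Integrable f μ) (k : ℕ) :
    Integrable (fun t => f t * walsh k t) μ :=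
  hf.mul_bdd (c := 1) (measurable_walsh k).aestronglyMeasurable (.of_forall fun t => by
    rw [Real.norm_eq_abs, abs_walsh])

lemma integrable_walsh (k : ℕ) : Integrable (walsh k) unitMeasure := by
  simpa using integrable_mul_walsh (integrable_const (1 : ℝ)) k

lemma integrable_dirichletKernel (N : ℕ) : Integrable (dirichletKernel N) unitMeasure :=
  integrable_finsetSum _ fun k _ => integrable_walsh k

lemma integrable_FKernel (N : ℕ) : Integrable (FKernel N) unitMeasure :=
  (integrable_finsetSum _ fun _ _ => (integrable_dirichletKernel _).div_const _).const_mul _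

lemma integral_unitMeasure_eq_zero_of_antiperiodic {f : ℝ → ℝ} {t : ℝ}
    (hf : Function.Periodic f 1) (ht : Function.Antiperiodic f t) :
    ∫ x, f x ∂unitMeasure = 0 := by
  have eq_neg_self : ∫ x in (0 : ℝ)..1, f x = -∫ x in (0 : ℝ)..1, f x :=
    calc ∫ x in (0 : ℝ)..1, f x = ∫ x in t..t + 1, f x := by
          simpa using hf.intervalIntegral_add_eq 0 t
      _ = ∫ x in (0 : ℝ)..1, f (x + t) := by
          rw [intervalIntegral.integral_comp_add_right, zero_add, add_comm]
      _ = -∫ x in (0 : ℝ)..1, f x := by simp only [ht _, intervalIntegral.integral_neg]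
  rw [unitMeasure, integral_Ico_eq_integral_Ioc, ← intervalIntegral.integral_of_le zero_le_one]
  linarith

lemma integral_walsh (n : ℕ) : ∫ x, walsh n x ∂unitMeasure = if n = 0 then 1 else 0 := by
  split_ifs with h
  · simp [h, walsh_zero]
  · obtain ⟨t, ht⟩ := exists_walsh_antiperiodic h
    exact integral_unitMeasure_eq_zero_of_antiperiodic (walsh_periodic n) ht

/-- The `k`-th Walsh–Fourier coefficient of a function of one variable. -/
def unitWalshCoef (f : ℝ → ℝ) (k : ℕ) : ℝ := ∫ t, f t * walsh k t ∂unitMeasure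

lemma unitWalshCoef_one (k : ℕ) : unitWalshCoef (fun _ => 1) k = if k = 0 then 1 else 0 := by
  simp only [unitWalshCoef, one_mul, integral_walsh]

lemma unitWalshCoef_div (f : ℝ → ℝ) (c : ℝ) (k : ℕ) :
    unitWalshCoef (fun t => f t / c) k = unitWalshCoef f k / c := by
  simp only [unitWalshCoef, div_mul_eq_mul_div, integral_div]

lemma unitWalshCoef_sum {ι : Type*} (s : Finset ι) {f : ι → ℝ → ℝ}
    (hf : ∀ i ∈ s, Integrable (f i) unitMeasure) (k : ℕ) :
    unitWalshCoef (fun t => ∑ i ∈ s, f i t) k = ∑ i ∈ s, unitWalshCoef (f i) k := by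
  simp only [unitWalshCoef, Finset.sum_mul]
  exact integral_finsetSum _ fun i hi => integrable_mul_walsh (hf i hi) k

lemma unitWalshCoef_walsh (j k : ℕ) : unitWalshCoef (walsh j) k = if j = k then 1 else 0 := by
  simp only [unitWalshCoef, ← walsh_xor, integral_walsh, Nat.xor_eq_zero_iff]

lemma unitWalshCoef_dirichletKernel (N k : ℕ) :
    unitWalshCoef (dirichletKernel N) k = if k < N then 1 else 0 :=
  (unitWalshCoef_sum _ (fun j _ => integrable_walsh j) k).trans (by simp [unitWalshCoef_walsh])

lemma unitWalshCoef_FKernel (N k : ℕ) :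
    unitWalshCoef (FKernel N) k = logSum (N - k) / logSum N := by
  have coef_sum : unitWalshCoef (fun t => ∑ i ∈ Finset.Ico 1 N, dirichletKernel (N - i) t / i) k =
      logSum (N - k) := by
    rw [unitWalshCoef_sum _ fun i _ => (integrable_dirichletKernel _).div_const _]
    simp only [unitWalshCoef_div, unitWalshCoef_dirichletKernel, ite_div, zero_div]
    rw [← Finset.sum_filter, logSum]
    congr 1
    ext i
    simp only [Finset.mem_filter, Finset.mem_Ico, Finset.mem_Icc]
    omega
  rw [← coef_sum, ← unitWalshCoef_div]
  congr 1
  ext t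
  rw [FKernel, one_div_mul_eq_div]

/-! ### Dyadic shells -/

/-- The indicator function of the `1`-periodic extension of `[2^{-m-1}, 2^{-m})`, written as a
product of Rademacher factors so that its Walsh expansion can be read off. -/
def dyadicShell (m : ℕ) (x : ℝ) : ℝ :=
  (1 - rademacher m x) / 2 * ∏ k ∈ Finset.range m, (1 + rademacher k x) / 2

lemma dyadicShell_nonneg (m : ℕ) (x : ℝ) : 0 ≤ dyadicShell m x := by
  refine mul_nonneg ?_ (Finset.prod_nonneg fun k _ => ?_)
  · rcases rademacher_eq_one_or_neg_one m x with h | h <;> simp [h]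
  · rcases rademacher_eq_one_or_neg_one k x with h | h <;> simp [h]

lemma sum_range_dyadicShell (N : ℕ) (x : ℝ) :
    ∑ m ∈ Finset.range N, dyadicShell m x =
      1 - ∏ k ∈ Finset.range N, (1 + rademacher k x) / 2 := by
  induction N with
  | zero => simp
  | succ N ih =>
    rw [Finset.sum_range_succ, ih, dyadicShell, Finset.prod_range_succ]
    ring

lemma sum_dyadicShell_le_one (s : Finset ℕ) (x : ℝ) : ∑ m ∈ s, dyadicShell m x ≤ 1 := by
  obtain ⟨N, hN⟩ := s.exists_nat_subset_range
  calc ∑ m ∈ s, dyadicShell m x ≤ ∑ m ∈ Finset.range N, dyadicShell m x :=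
        Finset.sum_le_sum_of_subset_of_nonneg hN fun m _ _ => dyadicShell_nonneg m x
    _ ≤ 1 := by
        rw [sum_range_dyadicShell, sub_le_self_iff]
        refine Finset.prod_nonneg fun k _ => ?_
        rcases rademacher_eq_one_or_neg_one k x with h | h <;> simp [h]

lemma abs_walsh_mul_dyadicShell (P m : ℕ) (x : ℝ) :
    |walsh P x * dyadicShell m x| = dyadicShell m x := by
  rw [abs_mul, abs_walsh, one_mul, abs_of_nonneg (dyadicShell_nonneg m x)]

lemma measurable_dyadicShell (m : ℕ) : Measurable (dyadicShell m) :=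
  ((measurable_const.sub (measurable_rademacher m)).div_const 2).mul
    (Finset.measurable_prod _ fun k _ =>
      (measurable_const.add (measurable_rademacher k)).div_const 2)

lemma integrable_mul_walsh_mul_dyadicShell {μ : Measure ℝ} {f : ℝ → ℝ} (hf : Integrable f μ)
    (P m : ℕ) : Integrable (fun x => f x * (walsh P x * dyadicShell m x)) μ :=
  hf.mul_bdd (c := 1) ((measurable_walsh P).mul (measurable_dyadicShell m)).aestronglyMeasurable
    (.of_forall fun x => by
      rw [Real.norm_eq_abs, abs_walsh_mul_dyadicShell]
      simpa using sum_dyadicShell_le_one {m} x)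

lemma sum_integral_mul_walsh_mul_dyadicShell_le {ι : Type*} {μ : Measure ℝ} {f : ℝ → ℝ}
    (hf : Integrable f μ) (s : Finset ι) (P : ι → ℕ) {m : ι → ℕ} (hm : Set.InjOn m s) :
    ∑ i ∈ s, ∫ x, f x * (walsh (P i) x * dyadicShell (m i) x) ∂μ ≤ ∫ x, |f x| ∂μ := by
  have integrable_term (i : ι) := integrable_mul_walsh_mul_dyadicShell hf (P i) (m i)
  rw [← integral_finsetSum _ fun i _ => integrable_term i]
  refine integral_mono (integrable_finsetSum _ fun i _ => integrable_term i) hf.abs fun x => ?_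
  calc ∑ i ∈ s, f x * (walsh (P i) x * dyadicShell (m i) x)
      ≤ ∑ i ∈ s, |f x| * dyadicShell (m i) x := Finset.sum_le_sum fun i _ =>
        (le_abs_self _).trans_eq (by rw [abs_mul, abs_walsh_mul_dyadicShell])
    _ = |f x| * ∑ k ∈ s.image m, dyadicShell k x := by
        rw [← Finset.mul_sum, Finset.sum_image hm]
    _ ≤ |f x| := mul_le_of_le_one_right (abs_nonneg _) (sum_dyadicShell_le_one _ x)

lemma walsh_mul_dyadicShell (m q : ℕ) (x : ℝ) :
    walsh (2 ^ (m + 1) * q) x * dyadicShell m x =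
      (∑ i ∈ Finset.range (2 ^ m),
        (walsh (2 ^ (m + 1) * q + i) x - walsh (2 ^ (m + 1) * q + (2 ^ m + i)) x)) /
          2 ^ (m + 1) := by
  have term_eq : ∀ i ∈ Finset.range (2 ^ m),
      walsh (2 ^ (m + 1) * q + i) x - walsh (2 ^ (m + 1) * q + (2 ^ m + i)) x =
        walsh (2 ^ (m + 1) * q) x * (1 - rademacher m x) * walsh i x := by
    intro i hi
    have hi := Finset.mem_range.1 hi
    rw [walsh_two_pow_mul_add (by omega), walsh_two_pow_mul_add (by omega), walsh_two_pow_add hi]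
    ring
  rw [Finset.sum_congr rfl term_eq, ← Finset.mul_sum, ← dirichletKernel, dirichletKernel_two_pow,
    dyadicShell, Finset.prod_div_distrib, Finset.prod_const, Finset.card_range]
  ring

lemma integral_mul_walsh_mul_dyadicShell {f : ℝ → ℝ} (hf : Integrable f unitMeasure) (m q : ℕ) :
    ∫ x, f x * (walsh (2 ^ (m + 1) * q) x * dyadicShell m x) ∂unitMeasure =
      (∑ i ∈ Finset.range (2 ^ m), (unitWalshCoef f (2 ^ (m + 1) * q + i) -
        unitWalshCoef f (2 ^ (m + 1) * q + (2 ^ m + i)))) / 2 ^ (m + 1) := by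
  have integrable_term (k : ℕ) := integrable_mul_walsh hf k
  simp only [walsh_mul_dyadicShell, mul_div_assoc', Finset.mul_sum, mul_sub, unitWalshCoef,
    ← integral_sub (integrable_term _) (integrable_term _), integral_div]
  rw [integral_finsetSum _ fun i _ => ?_]
  exact (integrable_term _).sub (integrable_term _)

/-! ### The sums `l_n` and the indices `p_n` -/

lemma logSum_mono : Monotone logSum := fun _ _ h =>
  Finset.sum_le_sum_of_subset_of_nonneg (Finset.Icc_subset_Icc le_rfl (Nat.sub_le_sub_right h 1))
    fun i _ _ => by positivity

lemma logSum_zero : logSum 0 = 0 := by simp [logSum]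

lemma logSum_nonneg (n : ℕ) : 0 ≤ logSum n := logSum_zero ▸ logSum_mono n.zero_le

lemma logSum_succ (n : ℕ) : logSum (n + 1) = harmonic n := by
  simp [logSum, harmonic_eq_sum_Icc]

lemma logSum_pos {n : ℕ} (hn : 2 ≤ n) : 0 < logSum n :=
  calc 0 < logSum 2 := by simp [logSum]
    _ ≤ logSum n := logSum_mono hn

lemma log_le_logSum (n : ℕ) : Real.log n ≤ logSum n := by
  cases n with
  | zero => simp [logSum_zero]
  | succ n => exact (log_add_one_le_harmonic n).trans_eq (logSum_succ n).symm

lemma logSum_le_one_add_log (n : ℕ) : logSum n ≤ 1 + Real.log n :=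
  calc logSum n ≤ logSum (n + 1) := logSum_mono n.le_succ
    _ ≤ 1 + Real.log n := (logSum_succ n).trans_le (harmonic_le_one_add_log n)

lemma four_pow_eq_two_pow (n : ℕ) : 4 ^ n = 2 ^ (2 * n) := by
  rw [pow_mul]
  norm_num

lemma pIdx_pos (n : ℕ) : 0 < pIdx n := Finset.sum_pos (fun k _ => by positivity) (by simp)

lemma two_le_pIdx {n : ℕ} (hn : n ≠ 0) : 2 ≤ pIdx n := by
  have four_le : 4 ^ 1 ≤ 4 ^ n := Nat.pow_le_pow_right (by norm_num) (Nat.one_le_iff_ne_zero.2 hn)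
  have four_pow_le : 4 ^ n ≤ pIdx n :=
    Finset.single_le_sum (f := fun k => 4 ^ k) (fun _ _ => Nat.zero_le _)
      (Finset.self_mem_range_succ n)
  omega

lemma pIdx_le_two_pow (n : ℕ) : pIdx n ≤ 2 ^ (2 * n + 1) := by
  have three_mul_pIdx : pIdx n * 3 + 1 = 4 ^ (n + 1) := geom_sum_mul_add 3 (n + 1)
  rw [pow_succ, four_pow_eq_two_pow] at three_mul_pIdx
  rw [pow_succ]
  omega

lemma exists_pIdx_eq_two_pow_add (a : ℕ) :
    ∃ r, pIdx a = 2 ^ (2 * a) + r ∧ 3 * r + 1 = 2 ^ (2 * a) := by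
  refine ⟨∑ k ∈ Finset.range a, 4 ^ k, ?_, ?_⟩
  · rw [pIdx, Finset.sum_range_succ, add_comm, four_pow_eq_two_pow]
  · rw [mul_comm, ← four_pow_eq_two_pow]
    exact geom_sum_mul_add 3 a

lemma exists_pIdx_eq_add {a n : ℕ} (h : a ≤ n) :
    ∃ q, pIdx n = 2 ^ (2 * a + 1) * q + pIdx a := by
  obtain ⟨e, rfl⟩ := Nat.exists_eq_add_of_le h
  refine ⟨2 * ∑ k ∈ Finset.range e, 4 ^ k, ?_⟩
  rw [pIdx, add_right_comm, Finset.sum_range_add, ← pIdx, ← mul_assoc, ← pow_succ,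
    show 2 * a + 1 + 1 = 2 * (a + 1) by ring, ← four_pow_eq_two_pow, Finset.mul_sum, add_comm]
  simp only [pow_add]

lemma logSum_pIdx_le (n : ℕ) : logSum (pIdx n) ≤ 2 * (n + 1) :=
  calc logSum (pIdx n) ≤ 1 + Real.log (pIdx n) := logSum_le_one_add_log _
    _ ≤ 1 + Real.log (2 ^ (2 * n + 1)) := by
        gcongr
        · exact_mod_cast pIdx_pos n
        · exact_mod_cast pIdx_le_two_pow n
    _ = 1 + (2 * n + 1) * Real.log 2 := by
        rw [Real.log_pow]
        push_cast
        rfl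
    _ ≤ 2 * (n + 1) := by nlinarith [Real.log_two_lt_d9, n.cast_nonneg (α := ℝ)]

lemma half_le_logSum {a r : ℕ} (h : 3 * r + 1 = 2 ^ (2 * a)) : (a : ℝ) / 2 ≤ logSum (r + 1) := by
  have two_pow_le : 2 ^ a ≤ r + 1 := by
    rw [mul_comm 2, pow_mul, sq] at h
    rcases a.eq_zero_or_pos with rfl | ha
    · simp
    · have : 2 ^ 1 ≤ 2 ^ a := Nat.pow_le_pow_right two_pos ha
      nlinarith
  calc (a : ℝ) / 2 ≤ a * Real.log 2 := by nlinarith [Real.log_two_gt_d9, a.cast_nonneg (α := ℝ)]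
    _ = Real.log (2 ^ a) := (Real.log_pow 2 a).symm
    _ ≤ Real.log (r + 1 : ℕ) := Real.log_le_log (by positivity) (by exact_mod_cast two_pow_le)
    _ ≤ logSum (r + 1) := log_le_logSum _

/-! ### The `L¹` norm of the Nörlund kernel -/

lemma sub_mul_le_sum_range_sub {L : ℕ → ℝ} (hL : Monotone L) (hL₀ : L 0 = 0) (N r : ℕ) :
    ((N : ℝ) - r) * L (r + 1) ≤ ∑ i ∈ Finset.range N, (L (N + r - i) - L (r - i)) := by
  have first_block : (N : ℝ) * L (r + 1) ≤ ∑ i ∈ Finset.range N, L (N + r - i) := by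
    simpa using Finset.card_nsmul_le_sum (Finset.range N) (fun i => L (N + r - i)) (L (r + 1))
      fun i hi => hL (by have := Finset.mem_range.1 hi; omega)
  have second_block : ∑ i ∈ Finset.range N, L (r - i) ≤ r * L (r + 1) :=
    calc ∑ i ∈ Finset.range N, L (r - i) ≤ ∑ i ∈ Finset.range (r + N), L (r - i) :=
          Finset.sum_le_sum_of_subset_of_nonneg (Finset.range_subset_range.2 (by omega))
            fun i _ _ => hL₀ ▸ hL (Nat.zero_le _)
      _ = ∑ i ∈ Finset.range r, L (r - i) := by simp [Finset.sum_range_add, hL₀]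
      _ ≤ r * L (r + 1) := by
          simpa using Finset.sum_le_card_nsmul (Finset.range r) (fun i => L (r - i)) (L (r + 1))
            fun i _ => hL (by omega)
  rw [Finset.sum_sub_distrib, sub_mul]
  exact sub_le_sub first_block second_block

lemma le_integral_FKernel_mul_walsh_mul_dyadicShell {N m q r : ℕ}
    (hN : N = 2 ^ (m + 1) * q + (2 ^ m + r)) :
    (2 ^ m - r) / 2 ^ (m + 1) * (logSum (r + 1) / logSum N) ≤
      ∫ x, FKernel N x * (walsh (2 ^ (m + 1) * q) x * dyadicShell m x) ∂unitMeasure := by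
  have index_first (i : ℕ) : N - (2 ^ (m + 1) * q + i) = 2 ^ m + r - i := by omega
  have index_second (i : ℕ) : N - (2 ^ (m + 1) * q + (2 ^ m + i)) = r - i := by omega
  have block_sum := sub_mul_le_sum_range_sub logSum_mono logSum_zero (2 ^ m) r
  push_cast at block_sum
  rw [integral_mul_walsh_mul_dyadicShell (integrable_FKernel N), div_mul_div_comm, mul_comm (2 ^ _),
    ← div_div]
  simp only [unitWalshCoef_FKernel, index_second, index_first, ← sub_div, ← Finset.sum_div]
  have := logSum_nonneg N
  gcongr

lemma exists_le_integral_FKernel_pIdx_mul {a n : ℕ} (h : a ≤ n) :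
    ∃ P, a / 6 / logSum (pIdx n) ≤
      ∫ x, FKernel (pIdx n) x * (walsh P x * dyadicShell (2 * a) x) ∂unitMeasure := by
  obtain ⟨q, hq⟩ := exists_pIdx_eq_add h
  obtain ⟨r, hpr, hr⟩ := exists_pIdx_eq_two_pow_add a
  have third_le : (1 : ℝ) / 3 ≤ (2 ^ (2 * a) - r) / 2 ^ (2 * a + 1) := by
    have hr' : 3 * (r : ℝ) + 1 = 2 ^ (2 * a) := by exact_mod_cast hr
    rw [le_div_iff₀ (by positivity), pow_succ]
    linarith
  refine ⟨2 ^ (2 * a + 1) * q, ?_⟩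
  calc (a : ℝ) / 6 / logSum (pIdx n) = 1 / 3 * (a / 2 / logSum (pIdx n)) := by ring
    _ ≤ (2 ^ (2 * a) - r) / 2 ^ (2 * a + 1) * (logSum (r + 1) / logSum (pIdx n)) := by
        have := logSum_nonneg (pIdx n)
        have := half_le_logSum hr
        gcongr
    _ ≤ _ := le_integral_FKernel_mul_walsh_mul_dyadicShell (hpr ▸ hq)

lemma div_le_integral_abs_FKernel_pIdx (n : ℕ) :
    (n : ℝ) / 24 ≤ ∫ x, |FKernel (pIdx n) x| ∂unitMeasure := by
  rcases eq_or_ne n 0 with rfl | hn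
  · simpa using integral_nonneg fun x => abs_nonneg (FKernel (pIdx 0) x)
  have logSum_pos := logSum_pos (two_le_pIdx hn)
  have exists_sign (a : ℕ) := exists_le_integral_FKernel_pIdx_mul (a := a) (n := n)
  choose! P hP using exists_sign
  calc (n : ℝ) / 24 = n * (n + 1) / 12 / (2 * (n + 1)) := by field_simp; norm_num
    _ ≤ n * (n + 1) / 12 / logSum (pIdx n) := by gcongr; exact logSum_pIdx_le n
    _ = ∑ a ∈ Finset.range (n + 1), (a : ℝ) / 6 / logSum (pIdx n) := by
        have gauss_sum : (∑ a ∈ Finset.range (n + 1), (a : ℝ)) * 2 = n * (n + 1) := by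
          have := Finset.sum_range_id_mul_two (n + 1)
          rw [Nat.add_sub_cancel, mul_comm (n + 1)] at this
          rw [← Nat.cast_sum]
          exact_mod_cast this
        rw [← Finset.sum_div, ← Finset.sum_div, ← gauss_sum]
        ring
    _ ≤ ∑ a ∈ Finset.range (n + 1), ∫ x, FKernel (pIdx n) x *
          (walsh (P a) x * dyadicShell (2 * a) x) ∂unitMeasure :=
        Finset.sum_le_sum fun a ha => hP a (Finset.mem_range_succ_iff.1 ha)
    _ ≤ ∫ x, |FKernel (pIdx n) x| ∂unitMeasure :=
        sum_integral_mul_walsh_mul_dyadicShell_le (integrable_FKernel _) _ P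
          (mul_right_injective₀ two_ne_zero).injOn

/-! ### Tensor products -/

/-- The partial sums of the Walsh–Fourier series of a function of one variable. -/
def unitPartialSum (f : ℝ → ℝ) (N : ℕ) (t : ℝ) : ℝ :=
  ∑ k ∈ Finset.range N, unitWalshCoef f k * walsh k t

/-- The one-dimensional Nörlund logarithmic means, the factors of a mixed mean on `B`. -/
def norlundLogMean (f : ℝ → ℝ) (n : ℕ) (t : ℝ) : ℝ :=
  (logSum n)⁻¹ * ∑ i ∈ Finset.Ico 1 n, unitPartialSum f (n - i) t / i

/-- The one-dimensional Riesz logarithmic means, the factors of a mixed mean off `B`. -/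
def rieszLogMean (f : ℝ → ℝ) (n : ℕ) (t : ℝ) : ℝ :=
  (logSum n)⁻¹ * ∑ i ∈ Finset.Ico 1 n, unitPartialSum f i t / i

lemma unitPartialSum_one {N : ℕ} (hN : N ≠ 0) (t : ℝ) :
    unitPartialSum (fun _ => 1) N t = 1 := by
  simp [unitPartialSum, unitWalshCoef_one, walsh_zero, hN]

lemma unitPartialSum_dirichletKernel {N M : ℕ} (h : N ≤ M) (t : ℝ) :
    unitPartialSum (dirichletKernel M) N t = dirichletKernel N t := by
  refine Finset.sum_congr rfl fun k hk => ?_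
  rw [unitWalshCoef_dirichletKernel, if_pos ((Finset.mem_range.1 hk).trans_le h), one_mul]

lemma rieszLogMean_one {n : ℕ} (hn : 2 ≤ n) (t : ℝ) : rieszLogMean (fun _ => 1) n t = 1 := by
  have sum_eq_logSum :
      ∑ i ∈ Finset.Ico 1 n, unitPartialSum (fun _ => 1) i t / i = logSum n := by
    have Ico_eq_Icc : Finset.Ico 1 n = Finset.Icc 1 (n - 1) := by
      ext
      simp only [Finset.mem_Ico, Finset.mem_Icc]
      omega
    refine Finset.sum_congr Ico_eq_Icc fun i hi => ?_
    rw [unitPartialSum_one (by have := Finset.mem_Icc.1 hi; omega)]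
  rw [rieszLogMean, sum_eq_logSum, inv_mul_cancel₀ (logSum_pos hn).ne']

lemma norlundLogMean_dirichletKernel {n M : ℕ} (h : n ≤ M) (t : ℝ) :
    norlundLogMean (dirichletKernel M) n t = FKernel n t := by
  simp only [norlundLogMean, FKernel, one_div,
    unitPartialSum_dirichletKernel ((Nat.sub_le n _).trans h)]

lemma unitPartialSum_div (f : ℝ → ℝ) (c : ℝ) (N : ℕ) (t : ℝ) :
    unitPartialSum (fun s => f s / c) N t = unitPartialSum f N t / c := by
  simp only [unitPartialSum, unitWalshCoef_div, div_mul_eq_mul_div, Finset.sum_div]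

lemma norlundLogMean_div (f : ℝ → ℝ) (c : ℝ) (n : ℕ) (t : ℝ) :
    norlundLogMean (fun s => f s / c) n t = norlundLogMean f n t / c := by
  simp only [norlundLogMean, unitPartialSum_div, mul_div_assoc, Finset.sum_div, div_right_comm _ c]

section TensorProduct

variable {d : ℕ}

lemma cubeMeasure_eq_pi : cubeMeasure d = Measure.pi fun _ : Fin d => unitMeasure := by
  rw [cubeMeasure, unitCube, volume_pi, Measure.restrict_pi_pi]
  rfl

lemma integral_cubeMeasure_prod (f : Fin d → ℝ → ℝ) :
    ∫ x, ∏ i, f i (x i) ∂cubeMeasure d = ∏ i, ∫ t, f i t ∂unitMeasure := by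
  rw [cubeMeasure_eq_pi, integral_fintype_prod_eq_prod]

lemma integral_cubeMeasure_prod_mem (B : Finset (Fin d)) (f : Fin d → ℝ → ℝ) :
    ∫ x, ∏ i ∈ B, f i (x i) ∂cubeMeasure d = ∏ i ∈ B, ∫ t, f i t ∂unitMeasure := by
  have fiber_integral (i : Fin d) : ∫ t, (if i ∈ B then f i t else 1) ∂unitMeasure =
      if i ∈ B then ∫ t, f i t ∂unitMeasure else 1 := by
    split_ifs <;> simp
  simpa only [fiber_integral, Finset.prod_ite_mem, Finset.univ_inter] using
    integral_cubeMeasure_prod fun i t => if i ∈ B then f i t else 1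

lemma walshCoef_prod (f : Fin d → ℝ → ℝ) (j : Fin d → ℕ) :
    walshCoef (fun y => ∏ i, f i (y i)) j = ∏ i, unitWalshCoef (f i) (j i) := by
  simp only [walshCoef, ← Finset.prod_mul_distrib]
  exact integral_cubeMeasure_prod fun i t => f i t * walsh (j i) t

lemma rectPartialSum_prod (f : Fin d → ℝ → ℝ) (N : Fin d → ℕ) (x : Fin d → ℝ) :
    rectPartialSum (fun y => ∏ i, f i (y i)) N x = ∏ i, unitPartialSum (f i) (N i) (x i) := by
  simp only [rectPartialSum, walshCoef_prod, ← Finset.prod_mul_distrib, unitPartialSum,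
    Finset.prod_univ_sum]

lemma mixedLogMean_prod (B : Finset (Fin d)) (f : Fin d → ℝ → ℝ) (n : Fin d → ℕ)
    (x : Fin d → ℝ) :
    mixedLogMean B (fun y => ∏ i, f i (y i)) n x =
      ∏ i, if i ∈ B then norlundLogMean (f i) (n i) (x i) else rieszLogMean (f i) (n i) (x i) := by
  simp only [mixedLogMean, rectPartialSum_prod, ← Finset.prod_div_distrib]
  rw [← Finset.prod_univ_sum (fun j => Finset.Ico 1 (n j)) fun j k =>
      unitPartialSum (f j) (if j ∈ B then n j - k else k) (x j) / k,
    ← Finset.prod_inv_distrib, ← Finset.prod_mul_distrib]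
  refine Finset.prod_congr rfl fun j _ => ?_
  by_cases hj : j ∈ B <;> simp only [hj, if_true, if_false, norlundLogMean, rieszLogMean]

lemma mixedLogMean_prod_mem {B : Finset (Fin d)} {n : Fin d → ℕ} (hn : ∀ i ∉ B, 2 ≤ n i)
    (f : Fin d → ℝ → ℝ) (x : Fin d → ℝ) :
    mixedLogMean B (fun y => ∏ i ∈ B, f i (y i)) n x =
      ∏ i ∈ B, norlundLogMean (f i) (n i) (x i) := by
  have extend_by_one := mixedLogMean_prod B (fun i t => if i ∈ B then f i t else 1) n x
  simp only [Finset.prod_ite_mem, Finset.univ_inter] at extend_by_one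
  rw [extend_by_one, ← Finset.univ_inter B, ← Finset.prod_ite_mem]
  refine Finset.prod_congr rfl fun i _ => ?_
  by_cases hi : i ∈ B
  · simp only [hi, if_true, Finset.univ_inter]
  · simp only [hi, if_false, Finset.univ_inter, rieszLogMean_one (hn i hi)]

end TensorProduct

theorem stmt14_general {d : ℕ} (B : Finset (Fin d)) {n M : ℕ} (hn : n ≠ 0) (hM : pIdx n ≤ M) :
    ((n : ℝ) / 48) ^ B.card ≤
      ∫ x, |mixedLogMean B (fun y => ∏ i ∈ B, dirichletKernel M (y i) / 2)
        (fun _ => pIdx n) x| ∂(cubeMeasure d) := by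
  have mixedLogMean_eq (x : Fin d → ℝ) :
      mixedLogMean B (fun y => ∏ i ∈ B, dirichletKernel M (y i) / 2) (fun _ => pIdx n) x =
        ∏ i ∈ B, FKernel (pIdx n) (x i) / 2 := by
    rw [mixedLogMean_prod_mem (fun _ _ => two_le_pIdx hn) fun _ t => dirichletKernel M t / 2]
    simp only [norlundLogMean_div, norlundLogMean_dirichletKernel hM]
  calc ((n : ℝ) / 48) ^ B.card = (n / 24 / 2) ^ B.card := by ring
    _ ≤ ((∫ t, |FKernel (pIdx n) t| ∂unitMeasure) / 2) ^ B.card := by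
        gcongr
        exact div_le_integral_abs_FKernel_pIdx n
    _ = ∏ i ∈ B, ∫ t, |FKernel (pIdx n) t / 2| ∂unitMeasure := by
        simp only [abs_div, abs_two, integral_div, Finset.prod_const]
    _ = ∫ x, ∏ i ∈ B, |FKernel (pIdx n) (x i) / 2| ∂cubeMeasure d :=
        (integral_cubeMeasure_prod_mem B fun _ t => |FKernel (pIdx n) t / 2|).symm
    _ = _ := by simp only [mixedLogMean_eq, Finset.abs_prod]

/-- `L^1` lower bound for the mixed logarithmic means of
`⊗_{i∈B} D_{2^{2n+1}}/2`: at least `c·n^{|B|}` for `n ≥ m₀`. -/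
theorem stmt14 (d : ℕ) (hd : 1 ≤ d) (B : Finset (Fin d)) (hB : B.Nonempty) :
    ∃ c > (0:ℝ), ∀ n : ℕ, m₀ ≤ n →
      c * (n : ℝ) ^ B.card ≤
        ∫ x, |mixedLogMean B
          (fun y => ∏ i ∈ B, dirichletKernel (2 ^ (2 * n + 1)) (y i) / 2)
          (fun _ => pIdx n) x| ∂(cubeMeasure d) := by
  refine ⟨(1 / 48) ^ B.card, by positivity, fun n _ => ?_⟩
  rcases eq_or_ne n 0 with rfl | hn
  · simpa [hB.card_ne_zero] using integral_nonneg fun _ => abs_nonneg _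
  · rw [← mul_pow, one_div_mul_eq_div]
    exact stmt14_general B hn (pIdx_le_two_pow n)

end
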